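/- arXiv:1505.01953 — 2 statements merged into one kernel-verified Lean document; each statement's English description precedes it below -/
import Mathlib

section
/- Let X, Y, W be real normed spaces, K : X → Y and A : X → W bounded linear operators, and R : W → ℝ ∪ {+∞}. Define T : Y → [−∞, +∞] by T(v) := inf{ R(A u'') : u'' ∈ X, K u'' = v } (with inf over the empty set equal to +∞). Suppose u ∈ X and ψ ∈ W* satisfy: (i) R(μ) − R(A u) ≥ ψ(μ − A u) for all μ ∈ W (ψ is a subgradient of R at Au); (ii) there exists λ ∈ Y* with λ(K w) = ψ(A w) for all w ∈ X (i.e. A*ψ ∈ range K*); and (iii) R(A u) = T(K u) with R(Au) finite. Then T(K u') − T(K u) ≥ ψ(A(u' − u)) for all u' ∈ X; that is, A*ψ is a subgradient of the composition u ↦ T(K u) at u. -/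
/-- Subgradients of the marginal functional `T(v) = inf { R(A u'') : K u'' = v }`:
if `ψ ∈ W*` is a subgradient of `R` at `A u`, `A*ψ` factors through `K` (i.e.
`A*ψ ∈ range K*`), and `R(A u) = T(K u)` is finite, then
`T(K u') − T(K u) ≥ ψ(A(u' − u))` for all `u'`. -/
theorem marginal_subgradient
    {X Y W : Type*} [NormedAddCommGroup X] [NormedSpace ℝ X]
    [NormedAddCommGroup Y] [NormedSpace ℝ Y]
    [NormedAddCommGroup W] [NormedSpace ℝ W]
    (K : X →L[ℝ] Y) (A : X →L[ℝ] W)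
    (R : W → EReal) (hbot : ∀ w : W, R w ≠ ⊥)
    (u : X) (ψ : W →L[ℝ] ℝ)
    (hsub : ∀ μ' : W, R (A u) + ((ψ (μ' - A u) : ℝ) : EReal) ≤ R μ')
    (hrange : ∃ lam : Y →L[ℝ] ℝ, ∀ w : X, lam (K w) = ψ (A w))
    (c : ℝ) (hfin : R (A u) = (c : EReal))
    (hmarg : R (A u) = sInf {r : EReal | ∃ u'' : X, K u'' = K u ∧ r = R (A u'')}) :
    ∀ u' : X,
      sInf {r : EReal | ∃ u'' : X, K u'' = K u ∧ r = R (A u'')}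
          + ((ψ (A (u' - u)) : ℝ) : EReal)
        ≤ sInf {r : EReal | ∃ u'' : X, K u'' = K u' ∧ r = R (A u'')} := by
  intro u'
  obtain ⟨lam, hlam⟩ := hrange
  rw [← hmarg]
  refine le_sInf ?_
  rintro r ⟨v, hv, rfl⟩
  have hψ : ψ (A (u' - u)) = ψ (A v - A u) := by
    rw [← map_sub A, ← hlam, ← hlam, map_sub K, map_sub K, hv]
  rw [hψ]
  exact hsub (A v)
end

section
/- Let X be a real normed space, Y a real normed space, Z a real Hilbert space, K : X → Y and K₀ : X → Z bounded linear operators, C₀ > 0 a constant with ‖K₀ u‖_Z ≤ C₀ ‖K u‖_Y for all u ∈ X, and f₀ ∈ Z. Define F : X → ℝ by F(u) := (1/2)‖K₀ u − f₀‖²_Z. Then for all u, u* ∈ X: ⟨K₀ u* − f₀, K₀(u − u*)⟩_Z ≤ F(u) − F(u*) ≤ ⟨K₀ u* − f₀, K₀(u − u*)⟩_Z + (C₀²/2)‖K(u − u*)‖²_Y. In particular, F is (K,2)-co-coercive and every point of X is (K,2)-minimal for F. -/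
open scoped RealInnerProductSpace

/-- For `F(u) = ½‖K₀u − f₀‖²_Z` with `Z` Hilbert and `‖K₀u‖ ≤ C₀‖Ku‖`:
`⟪K₀u* − f₀, K₀(u − u*)⟫ ≤ F(u) − F(u*) ≤ ⟪K₀u* − f₀, K₀(u − u*)⟫ + (C₀²/2)‖K(u − u*)‖²`,
i.e. `F` is `(K,2)`-co-coercive and every point is `(K,2)`-minimal. -/
theorem l2sq_cost_cocoercive_minimal
    {X Y Z : Type*} [NormedAddCommGroup X] [NormedSpace ℝ X]
    [NormedAddCommGroup Y] [NormedSpace ℝ Y]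
    [NormedAddCommGroup Z] [InnerProductSpace ℝ Z] [CompleteSpace Z]
    (K : X →L[ℝ] Y) (K₀ : X →L[ℝ] Z) (C₀ : ℝ) (hC₀ : 0 < C₀)
    (hdom : ∀ u : X, ‖K₀ u‖ ≤ C₀ * ‖K u‖) (f₀ : Z) :
    ∀ u ustar : X,
      ⟪K₀ ustar - f₀, K₀ (u - ustar)⟫ ≤
        (1 / 2) * ‖K₀ u - f₀‖ ^ 2 - (1 / 2) * ‖K₀ ustar - f₀‖ ^ 2 ∧
      (1 / 2) * ‖K₀ u - f₀‖ ^ 2 - (1 / 2) * ‖K₀ ustar - f₀‖ ^ 2 ≤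
        ⟪K₀ ustar - f₀, K₀ (u - ustar)⟫ + C₀ ^ 2 / 2 * ‖K (u - ustar)‖ ^ 2 := by
  intro u ustar
  have hexpand : ‖K₀ u - f₀‖ ^ 2 =
      ‖K₀ ustar - f₀‖ ^ 2 + 2 * ⟪K₀ ustar - f₀, K₀ (u - ustar)⟫ + ‖K₀ (u - ustar)‖ ^ 2 := by
    rw [← norm_add_sq_real, map_sub]
    congr 2
    abel
  have hbound : ‖K₀ (u - ustar)‖ ^ 2 ≤ C₀ ^ 2 * ‖K (u - ustar)‖ ^ 2 := by
    rw [← mul_pow]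
    exact pow_le_pow_left₀ (norm_nonneg _) (hdom _) 2
  constructor
  · linarith [sq_nonneg ‖K₀ (u - ustar)‖]
  · linarith
end
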